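/- Let ((A,∘),P) be a finite-dimensional averaging pre-Lie algebra, r ∈ A⊗A symmetric (τ(r) = r), and S : A → A a linear map. Define r♯ : A* → A by ⟨r♯(ξ), η⟩ = ⟨r, ξ⊗η⟩. If r♯ is a relative Rota-Baxter operator on ((A,∘),P) with respect to the representation ((A*, L*−R*, −R*), S*) — i.e. r♯(ξ)∘r♯(η) = r♯((L*−R*)(r♯(ξ))η − R*(r♯(η))ξ) for all ξ,η ∈ A* and P∘r♯ = r♯∘S* — then r is a solution of the S-admissible classical Yang-Baxter equation in ((A,∘),P): writing r = Σᵢ aᵢ⊗bᵢ, one has Σ_{i,j} (aᵢ ⊗ bᵢ∘aⱼ ⊗ bⱼ + aᵢ ⊗ aⱼ ⊗ bᵢ∘bⱼ) = Σ_{i,j} (aᵢ∘aⱼ ⊗ bᵢ ⊗ bⱼ + aᵢ ⊗ aⱼ ⊗ bⱼ∘bᵢ), together with (S⊗id)(r) = (id⊗P)(r) and (P⊗id)(r) = (id⊗S)(r). -/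

import Mathlib

open TensorProduct

namespace Stmt17

variable {k A : Type*} [Field k] [CharZero k] [AddCommGroup A] [Module k A]

/-- Transpose a family of endomorphisms of `A` to a family of endomorphisms of `A*`.
With `L = mul` and `R = mul.flip`, `L* − R* = dualTr (R − L)` and `−R* = dualTr R`. -/
noncomputable def dualTr (f : A →ₗ[k] Module.End k A) :
    A →ₗ[k] Module.End k (Module.Dual k A) :=
  (Module.Dual.transpose (R := k)).comp f

/-- The evaluation of the functional `ξ ⊗ η ∈ A*⊗A*` on an element of `A ⊗ A`. -/
noncomputable def pair (ξ η : Module.Dual k A) (r : A ⊗[k] A) : k :=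
  (TensorProduct.lid k k) (TensorProduct.map ξ η r)

/-- Rank-one functionals separate points of `A ⊗ A`. -/
theorem ext_two [FiniteDimensional k A] {x y : A ⊗[k] A}
    (h : ∀ ξ η : Module.Dual k A, pair ξ η x = pair ξ η y) : x = y := by
  let b := Module.finBasis k A
  have key : ∀ (t : A ⊗[k] A) i j,
      (b.tensorProduct b).repr t (i, j) = pair (b.coord i) (b.coord j) t := by
    intro t i j
    induction t with
    | zero => simp [pair]
    | tmul u v => simp [pair, mul_comm]
    | add u v hu hv => simp only [pair, map_add, Finsupp.add_apply] at *; rw [hu, hv]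
  apply (b.tensorProduct b).repr.injective
  ext ⟨i, j⟩
  rw [key, key, h]

/-- Evaluation of `ξ ⊗ η ⊗ ζ`. -/
noncomputable def triple (ξ η ζ : Module.Dual k A) : A ⊗[k] (A ⊗[k] A) →ₗ[k] k :=
  (TensorProduct.lid k k).toLinearMap ∘ₗ TensorProduct.map ξ
    ((TensorProduct.lid k k).toLinearMap ∘ₗ TensorProduct.map η ζ)

theorem triple_tmul (ξ η ζ : Module.Dual k A) (x y z : A) :
    triple ξ η ζ (x ⊗ₜ[k] (y ⊗ₜ[k] z)) = ξ x * (η y * ζ z) := by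
  simp [triple]

theorem ext_three [FiniteDimensional k A] {x y : A ⊗[k] (A ⊗[k] A)}
    (h : ∀ ξ η ζ : Module.Dual k A, triple ξ η ζ x = triple ξ η ζ y) : x = y := by
  let b := Module.finBasis k A
  let B := b.tensorProduct (b.tensorProduct b)
  have key : ∀ i j l, B.coord (i, j, l) = triple (b.coord i) (b.coord j) (b.coord l) := by
    intro i j l
    ext u v w
    simp [B, triple]
    ring
  apply B.repr.injective
  ext ⟨i, j, l⟩
  have := h (b.coord i) (b.coord j) (b.coord l)
  rw [← key] at this
  exact this

/-- Let `((A,∘),P)` be a finite-dimensional averaging pre-Lie algebra, `r ∈ A⊗A`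
symmetric, `S : A → A` linear, and `r♯ : A* → A` given by `⟨r♯(ξ),η⟩ = ⟨r, ξ⊗η⟩`.
If `r♯` is a relative Rota-Baxter operator on `((A,∘),P)` with respect to the
representation `((A*, L*−R*, −R*), S*)`, then `r` is a solution of the `S`-admissible
classical Yang-Baxter equation in `((A,∘),P)`. -/
theorem relative_RB_gives_admissible_CYBE [FiniteDimensional k A]
    (mul : A →ₗ[k] A →ₗ[k] A) (P S : A →ₗ[k] A)
    (r : A ⊗[k] A) (rsharp : Module.Dual k A →ₗ[k] A)
    (hpre : ∀ x y z : A,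
      mul (mul x y) z - mul x (mul y z) = mul (mul y x) z - mul y (mul x z))
    (havg1 : ∀ x y : A, mul (P x) (P y) = P (mul (P x) y))
    (havg2 : ∀ x y : A, mul (P x) (P y) = P (mul x (P y)))
    (hsymm : TensorProduct.comm k A A r = r)
    (hrsharp : ∀ ξ η : Module.Dual k A, η (rsharp ξ) = pair ξ η r)
    (hT : ∀ ξ η : Module.Dual k A,
      mul (rsharp ξ) (rsharp η)
        = rsharp (dualTr (mul.flip - mul) (rsharp ξ) η
            + dualTr mul.flip (rsharp η) ξ))
    (hPT : ∀ ξ : Module.Dual k A, P (rsharp ξ) = rsharp (S.dualMap ξ)) :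
    (∀ (ι : Type) (s : Finset ι) (a b : ι → A),
      r = ∑ i ∈ s, a i ⊗ₜ[k] b i →
      ∑ i ∈ s, ∑ j ∈ s,
          ((a i) ⊗ₜ[k] ((mul (b i) (a j)) ⊗ₜ[k] (b j))
            + (a i) ⊗ₜ[k] ((a j) ⊗ₜ[k] (mul (b i) (b j))))
        = ∑ i ∈ s, ∑ j ∈ s,
          ((mul (a i) (a j)) ⊗ₜ[k] ((b i) ⊗ₜ[k] (b j))
            + (a i) ⊗ₜ[k] ((a j) ⊗ₜ[k] (mul (b j) (b i))))) ∧
    TensorProduct.map S LinearMap.id r = TensorProduct.map LinearMap.id P r ∧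
    TensorProduct.map P LinearMap.id r = TensorProduct.map LinearMap.id S r := by
  have hcomm : ∀ (ξ η : Module.Dual k A) (t : A ⊗[k] A),
      pair ξ η (TensorProduct.comm k A A t) = pair η ξ t := by
    intro ξ η t
    induction t with
    | zero => simp [pair]
    | tmul u v => simp [pair, mul_comm]
    | add u v hu hv => simp only [pair, map_add] at *; rw [hu, hv]
  have hsym : ∀ ξ η : Module.Dual k A, η (rsharp ξ) = ξ (rsharp η) := by
    intro ξ η
    rw [hrsharp, hrsharp, ← hcomm, hsymm]
  have hmap : ∀ (ξ η : Module.Dual k A) (f g : A →ₗ[k] A),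
      pair ξ η (TensorProduct.map f g r) = pair (f.dualMap ξ) (g.dualMap η) r := by
    intro ξ η f g
    rw [pair, pair, ← LinearMap.comp_apply, ← TensorProduct.map_comp]
    rfl
  have hid : ∀ ξ : Module.Dual k A, (LinearMap.id : A →ₗ[k] A).dualMap ξ = ξ := fun ξ => rfl
  refine ⟨?_, ?_, ?_⟩
  · intro ι s a b hr
    have h1 : ∀ ξ, rsharp ξ = ∑ i ∈ s, ξ (a i) • b i := by
      intro ξ
      rw [← sub_eq_zero, ← Module.forall_dual_apply_eq_zero_iff k]
      intro η
      rw [map_sub, hrsharp, hr]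
      simp [pair, map_sum]
    have h2 : ∀ ξ, rsharp ξ = ∑ i ∈ s, ξ (b i) • a i := by
      intro ξ
      rw [← sub_eq_zero, ← Module.forall_dual_apply_eq_zero_iff k]
      intro η
      rw [map_sub, hsym, hrsharp, hr]
      simp [pair, map_sum, mul_comm]
    apply ext_three
    intro ξ η ζ
    have e1 : ∑ i ∈ s, ∑ j ∈ s, ξ (a i) * (η (mul (b i) (a j)) * ζ (b j))
        = η (mul (rsharp ξ) (rsharp ζ)) := by
      rw [h1 ξ, h2 ζ]
      simp only [map_sum, LinearMap.sum_apply, map_smul, LinearMap.smul_apply, smul_eq_mul,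
        Finset.mul_sum]
      rw [Finset.sum_comm]
      refine Finset.sum_congr rfl fun i _ => Finset.sum_congr rfl fun j _ => by ring
    have e2 : ∀ ξ η : Module.Dual k A, ∑ i ∈ s, ∑ j ∈ s, ξ (a i) * (η (a j) * ζ (mul (b i) (b j)))
        = ζ (mul (rsharp ξ) (rsharp η)) := by
      intro ξ η
      rw [h1 ξ, h1 η]
      simp only [map_sum, LinearMap.sum_apply, map_smul, LinearMap.smul_apply, smul_eq_mul,
        Finset.mul_sum]
      rw [Finset.sum_comm]
      refine Finset.sum_congr rfl fun i _ => Finset.sum_congr rfl fun j _ => by ring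
    have e3 : ∑ i ∈ s, ∑ j ∈ s, ξ (mul (a i) (a j)) * (η (b i) * ζ (b j))
        = ξ (mul (rsharp η) (rsharp ζ)) := by
      rw [h2 η, h2 ζ]
      simp only [map_sum, LinearMap.sum_apply, map_smul, LinearMap.smul_apply, smul_eq_mul,
        Finset.mul_sum]
      rw [Finset.sum_comm]
      refine Finset.sum_congr rfl fun i _ => Finset.sum_congr rfl fun j _ => by ring
    have e4 : ∑ i ∈ s, ∑ j ∈ s, ξ (a i) * (η (a j) * ζ (mul (b j) (b i)))
        = ζ (mul (rsharp η) (rsharp ξ)) := by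
      rw [← e2, Finset.sum_comm]
      refine Finset.sum_congr rfl fun i _ => Finset.sum_congr rfl fun j _ => by ring
    simp only [map_sum, map_add, triple_tmul, Finset.sum_add_distrib]
    rw [e1, e2, e3, e4, hT η ζ, hsym]
    simp only [dualTr, LinearMap.add_apply, LinearMap.comp_apply, Module.Dual.transpose_apply,
      LinearMap.sub_apply, LinearMap.flip_apply, map_sub]
    ring
  · apply ext_two
    intro ξ η
    rw [hmap, hmap, hid, hid, ← hrsharp, ← hrsharp, ← hPT]
    rfl
  · apply ext_two
    intro ξ η
    rw [hmap, hmap, hid, hid, ← hrsharp, ← hrsharp, hsym ξ, ← hPT, hsym]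
    rfl

end Stmt17
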